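/- Let a_d, a_t ∈ ℝ and k ∈ ℂ. Define the 3×3 complex matrices P = [[1,0,0],[0,1/2,1/2],[0,1/2,1/2]], X(k) = [[e^{ik a_d}, e^{−ik a_d}, 0],[1,1,0],[0,0,(1+e^{k² a_t})/√2]], Y(k) = [[ik e^{ik a_d}, −ik e^{−ik a_d}, 0],[−ik, ik, 0],[0,0,(1−e^{k² a_t})/√2]]. Then det( P·X(k) + (I−P)·Y(k) ) = (i/√2)·[ sin(k a_d)·(1 − e^{k² a_t}) + k·cos(k a_d)·(1 + e^{k² a_t}) ]. -/

import Mathlib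

open Matrix Complex

/-- The projection `P` for the one-diffusion-edge/one-transport-edge example. -/
noncomputable def Pex : Matrix (Fin 3) (Fin 3) ℂ :=
  !![1, 0, 0;
     0, 1/2, 1/2;
     0, 1/2, 1/2]

/-- The matrix `X(k)`. -/
noncomputable def Xex (ad at' : ℝ) (k : ℂ) : Matrix (Fin 3) (Fin 3) ℂ :=
  !![Complex.exp (Complex.I * k * (ad : ℂ)), Complex.exp (-(Complex.I * k * (ad : ℂ))), 0;
     1, 1, 0;
     0, 0, (1 + Complex.exp (k ^ 2 * (at' : ℂ))) / (Real.sqrt 2 : ℂ)]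

/-- The matrix `Y(k)`. -/
noncomputable def Yex (ad at' : ℝ) (k : ℂ) : Matrix (Fin 3) (Fin 3) ℂ :=
  !![Complex.I * k * Complex.exp (Complex.I * k * (ad : ℂ)),
       -(Complex.I * k) * Complex.exp (-(Complex.I * k * (ad : ℂ))), 0;
     -(Complex.I * k), Complex.I * k, 0;
     0, 0, (1 - Complex.exp (k ^ 2 * (at' : ℂ))) / (Real.sqrt 2 : ℂ)]

/-- the secular determinant for the graph with one diffusion edge of length
`a_d` and one transport edge of length `a_t`, with `L = 0`:
`det(P X(k) + (I−P) Y(k)) = (i/√2)[sin(k a_d)(1 − e^{k² a_t}) + k cos(k a_d)(1 + e^{k² a_t})]`. -/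
theorem stmt_13 (ad at' : ℝ) (k : ℂ) :
    (Pex * Xex ad at' k + (1 - Pex) * Yex ad at' k).det =
      Complex.I / (Real.sqrt 2 : ℂ) *
        (Complex.sin (k * (ad : ℂ)) * (1 - Complex.exp (k ^ 2 * (at' : ℂ))) +
          k * Complex.cos (k * (ad : ℂ)) * (1 + Complex.exp (k ^ 2 * (at' : ℂ)))) := by
  have e1 : Complex.exp (Complex.I * k * (ad : ℂ)) =
      Complex.cos (k * ad) + Complex.sin (k * ad) * Complex.I := by
    rw [← Complex.exp_mul_I]; congr 1; ring
  have e2 : Complex.exp (-(Complex.I * k * (ad : ℂ))) =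
      Complex.cos (k * ad) - Complex.sin (k * ad) * Complex.I := by
    have h := Complex.exp_mul_I (-(k * (ad : ℂ)))
    rw [Complex.cos_neg, Complex.sin_neg] at h
    rw [show -(Complex.I * k * (ad : ℂ)) = -(k * ad) * Complex.I by ring, h]; ring
  rw [Matrix.det_fin_three]
  simp only [Pex, Xex, Yex, e1, e2]
  simp [Matrix.mul_apply, Fin.sum_univ_three, Matrix.one_apply]
  ring
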